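/- Let K ⊆ ℝ² be a compact convex set with nonempty interior that is centrally symmetric (K = −K). Suppose that for every orthogonal transformation Q ∈ O(2) the Steiner symmetrization St₁(Q(K)) contains the square [−1/2, 1/2]². Then K contains a lattice point of ℤ² in any position. -/

import Mathlib

/-!
Fix a position `Q(K) + x`. Some integer `m` has `a = m - x₀ ∈ [-1/2, 1/2]`, and since
`(a, 1/2) ∈ St₁(Q(K))`, the vertical section of `Q(K)` at abscissa `a` has length at least `1`.
This section is a compact interval (`vsect_eq_Icc`), so it contains a point of `ℤ - x₁`, say
`n - x₁`. Then `(m, n) ∈ Q(K) + x`.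
-/

open Set Pointwise Real MeasureTheory

noncomputable section

abbrev E2 := EuclideanSpace ℝ (Fin 2)

def v2 (a b : ℝ) : E2 := (WithLp.equiv 2 (Fin 2 → ℝ)).symm ![a, b]

/-- The lattice `ℤ² ⊆ ℝ²`. -/
def latticeZ2 : Set E2 := {v | ∀ i, ∃ m : ℤ, v i = (m : ℝ)}

/-- `K` contains a lattice point of `ℤ²` in any position: every rotated and translated
copy `Q(K) + x` of `K` contains a point of `ℤ²`. -/
def CoversAnyPosition (K : Set E2) : Prop :=
  ∀ (Q : E2 ≃ₗᵢ[ℝ] E2) (x : E2), ∃ z ∈ (fun y => Q y + x) '' K, z ∈ latticeZ2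

/-- The vertical section of `C ⊆ ℝ²` at abscissa `a`. -/
def vsect (C : Set E2) (a : ℝ) : Set ℝ := {z | v2 a z ∈ C}

/-- The Steiner symmetrization of `C ⊆ ℝ²` with respect to the horizontal axis. -/
def steiner1 (C : Set E2) : Set E2 :=
  {x | (vsect C (x 0)).Nonempty ∧ |x 1| ≤ (volume (vsect C (x 0))).toReal / 2}

/-- The square `[-1/2, 1/2]²`. -/
def unitSq : Set E2 :=
  {x | x 0 ∈ Icc (-(1/2) : ℝ) (1/2) ∧ x 1 ∈ Icc (-(1/2) : ℝ) (1/2)}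

/-- A nonempty vertical section of a compact convex set is a compact interval. -/
lemma vsect_eq_Icc {C : Set E2} (hC : IsCompact C) (hconv : Convex ℝ C) {a : ℝ}
    (hne : (vsect C a).Nonempty) :
    vsect C a = Icc (sInf (vsect C a)) (sSup (vsect C a)) := by
  have hcont : Continuous fun z : ℝ => v2 a z := by
    refine (PiLp.continuous_toLp 2 (fun _ : Fin 2 => ℝ)).comp (continuous_pi fun i => ?_)
    fin_cases i
    · exact continuous_const
    · exact continuous_id
  have hclosed : IsClosed (vsect C a) := hC.isClosed.preimage hcont
  have hproj : IsCompact ((fun v : E2 => v 1) '' C) := hC.image (by fun_prop)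
  have hcompact : IsCompact (vsect C a) :=
    hproj.of_isClosed_subset hclosed fun z hz => ⟨v2 a z, hz, by simp [v2]⟩
  have hcv : Convex ℝ (vsect C a) := by
    intro y hy z hz s t hs ht hst
    have hmem := hconv hy hz hs ht hst
    have heq : s • v2 a y + t • v2 a z = v2 a (s • y + t • z) := by
      ext i
      fin_cases i
      · simp [v2, ← add_mul, hst]
      · simp [v2]
    rw [heq] at hmem
    exact hmem
  exact eq_Icc_of_connected_compact ⟨hne, hcv.isPreconnected⟩ hcompact

/-- If for every rotation `Q(K)` of a centrally symmetric convex body `K ⊆ ℝ²` the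
Steiner symmetrization `St₁(Q(K))` contains `[-1/2,1/2]²`, then `K` contains a lattice
point of `ℤ²` in any position. -/
theorem coversAnyPosition_of_steiner (K : Set E2) (hK : IsCompact K)
    (hconv : Convex ℝ K) (hint : (interior K).Nonempty) (hsym : K = -K)
    (h : ∀ Q : E2 ≃ₗᵢ[ℝ] E2, unitSq ⊆ steiner1 (Q '' K)) :
    CoversAnyPosition K := by
  intro Q x
  have hround := abs_le.mp (abs_sub_round (x 0))
  set m : ℤ := round (x 0)
  set a : ℝ := m - x 0 with ha
  have hsq : v2 a (1 / 2) ∈ unitSq := by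
    simp only [unitSq, v2, mem_ofPred_eq, mem_Icc]
    norm_num
    constructor <;> linarith [hround.1, hround.2]
  obtain ⟨hne, hlen⟩ := h Q hsq
  have hv0 : (v2 a (1 / 2)) 0 = a := by simp [v2]
  have hv1 : (v2 a (1 / 2)) 1 = 1 / 2 := by simp [v2]
  rw [hv0] at hne hlen
  rw [hv1] at hlen
  have hIcc := vsect_eq_Icc (hK.image Q.continuous)
    (hconv.linear_image Q.toLinearEquiv.toLinearMap) hne
  set S := vsect (Q '' K) a
  have hle : sInf S ≤ sSup S := by
    rw [hIcc] at hne
    exact nonempty_Icc.mp hne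
  have hone : 1 ≤ sSup S - sInf S := by
    rw [hIcc, Real.volume_Icc, ENNReal.toReal_ofReal (sub_nonneg.mpr hle),
      abs_of_pos (by norm_num)] at hlen
    linarith
  -- `n` is the least integer for which `n - x₁` is not below the section.
  set n : ℤ := ⌈sInf S + x 1⌉
  have hn : (n : ℝ) - x 1 ∈ S := by
    rw [hIcc]
    have h1 := Int.le_ceil (sInf S + x 1)
    have h2 := Int.ceil_lt_add_one (sInf S + x 1)
    constructor <;> linarith
  obtain ⟨y, hy, hQy⟩ := hn
  refine ⟨Q y + x, ⟨y, hy, rfl⟩, fun i => ?_⟩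
  rw [hQy]
  fin_cases i
  · exact ⟨m, by simp [v2, ha]⟩
  · exact ⟨n, by simp [v2]⟩
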